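/- arXiv:1101.3948 — 4 statements merged into one kernel-verified Lean document; each statement's English description precedes it below -/
import Mathlib

section
/- Let n, k, m be positive integers with k ≥ n+1 and let 1 ≤ l ≤ n. Then Σ_{J⊆{1,…,n}, |J|=l} S(k, m, J) = (1/m^{k−n+1}) · Σ 1/(q₁ q₂ ⋯ q_{n−1}), where the sum on the right runs over all tuples of positive integers (q₁,…,q_{n−1}) with m > q₁ > q₂ > ⋯ > q_{l−1} ≥ 1 and 1 ≤ q_l ≤ q_{l+1} ≤ ⋯ ≤ q_{n−1} ≤ m. -/
open Finset

/-- `PS p j` is the partial sum `p₁ + ⋯ + p_j` of the positive integers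
`pᵢ = p (i-1) + 1` encoded by `p : Fin N → ℕ`. -/
def PS {N : ℕ} (p : Fin N → ℕ) (j : ℕ) : ℕ :=
  ∑ i ∈ Finset.univ.filter (fun i : Fin N => (i : ℕ) < j), (p i + 1)

/-- `Ikr n k r` is the set `I(k,r)` of tuples `(k₁,…,kₙ)` of positive integers with
`kₙ ≥ 2`, `k₁ + ⋯ + kₙ = k` and `k₁ = ⋯ = k_{r-1} = 1`; the tuple is encoded as
`kv : Fin n → ℕ` with `k_j = kv (j-1)`. -/
def Ikr (n k r : ℕ) : Finset (Fin n → ℕ) :=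
  (Fintype.piFinset fun _ : Fin n => Finset.range (k + 1)).filter fun kv =>
    (∀ i, 1 ≤ kv i) ∧ (∀ i : Fin n, (i : ℕ) = n - 1 → 2 ≤ kv i) ∧
      (∑ i, kv i) = k ∧ ∀ i : Fin n, (i : ℕ) + 2 ≤ r → kv i = 1

/-- `S n k m J` is the quantity `S(k,m,J)`: the sum over `𝐤 ∈ I(k, max J)` and over
tuples `𝐦` of positive integers with `∑_{j∈J} m_j = m` of
`1/(m₁^{k₁}(m₁+m₂)^{k₂}⋯(m₁+⋯+mₙ)^{kₙ})`. -/
noncomputable def S (n k m : ℕ) (J : Finset (Fin n)) : ℝ :=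
  ∑ kv ∈ Ikr n k (J.sup fun j => (j : ℕ) + 1),
    ∑' mv : {mv : Fin n → ℕ // (∑ j ∈ J, (mv j + 1)) = m},
      (∏ i : Fin n, ((PS mv.val ((i : ℕ) + 1) : ℕ) : ℝ) ^ kv i)⁻¹

/-- `Qset n m l` is the set `Q_l` of tuples `(q₁,…,q_{n-1})` of positive integers with
`m > q₁ > ⋯ > q_{l-1} ≥ 1` and `1 ≤ q_l ≤ ⋯ ≤ q_{n-1} ≤ m`; the tuple is encoded as
`q : Fin (n-1) → ℕ` with `q_j = q (j-1) + 1`. -/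
def Qset (n m l : ℕ) : Finset (Fin (n - 1) → ℕ) :=
  (Fintype.piFinset fun _ : Fin (n - 1) => Finset.range m).filter fun q =>
    (∀ i : Fin (n - 1), (i : ℕ) < l - 1 → q i + 1 < m) ∧
    (∀ i j : Fin (n - 1), (i : ℕ) < (j : ℕ) → (j : ℕ) < l - 1 → q j < q i) ∧
    (∀ i j : Fin (n - 1), l - 1 ≤ (i : ℕ) → (i : ℕ) ≤ (j : ℕ) → q i ≤ q j) ∧
    (∀ i : Fin (n - 1), l - 1 ≤ (i : ℕ) → q i + 1 ≤ m)

open scoped NNReal ENNReal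

noncomputable section HelperSection

namespace FixedCard

/-- Strict chain sums `∑_{0<A₁<⋯<A_l=A} 1/(A₁⋯A_l)`. -/
def Z : ℕ → ℕ → ℝ≥0
  | 0, A => if A = 0 then 1 else 0
  | l + 1, A => (A : ℝ≥0)⁻¹ * ∑ a ∈ range A, Z l a

/-- Weak chain sums. -/
def W : ℕ → ℕ → ℝ≥0
  | 0, _ => 1
  | r + 1, m => ∑ q ∈ range m, ((q : ℝ≥0) + 1)⁻¹ * W r (q + 1)

/-- Conditions on the combined data. -/
def cond {n : ℕ} (l w A B : ℕ) (d : Fin n → Bool × ℕ × ℕ) : Prop :=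
  (∑ i, if (d i).1 = true then 1 else 0) = l ∧
  (∑ i, if (d i).1 = true then (d i).2.1 + 1 else 0) = A ∧
  (∑ i, if (d i).1 = true then 0 else (d i).2.1 + 1) = B ∧
  (∑ i, (d i).2.2) = w ∧
  ∀ i j, i < j → (d j).1 = true → (d i).2.2 = 0

/-- The summand. -/
def term {n : ℕ} (d : Fin n → Bool × ℕ × ℕ) : ℝ≥0 :=
  ∏ i : Fin n, (((PS (fun i => (d i).2.1) ((i : ℕ) + 1) : ℕ) : ℝ≥0) ^ ((d i).2.2 + 1))⁻¹

open Classical in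
/-- The sum over shuffles. -/
def T (n l w A B : ℕ) : ℝ≥0∞ :=
  ∑' d : Fin n → Bool × ℕ × ℕ, if cond l w A B d then (term d : ℝ≥0∞) else 0

lemma tsum_snoc {n : ℕ} {α : Type} (f : (Fin (n + 1) → α) → ℝ≥0∞) :
    ∑' d, f d = ∑' x : α, ∑' d : Fin n → α, f (Fin.snoc (α := fun _ => α) d x) := by
  rw [← (Fin.snocEquiv (fun _ : Fin (n + 1) => α)).tsum_eq, ENNReal.tsum_prod']
  rfl

lemma tsum_cons {n : ℕ} {α : Type} (f : (Fin (n + 1) → α) → ℝ≥0∞) :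
    ∑' d, f d = ∑' x : α, ∑' d : Fin n → α, f (Fin.cons (α := fun _ => α) x d) := by
  rw [← (Fin.consEquiv (fun _ : Fin (n + 1) => α)).tsum_eq, ENNReal.tsum_prod']
  rfl

lemma tsum_sub (A : ℕ) (f : ℕ → ℝ≥0∞) :
    ∑' m : ℕ, (if m + 1 ≤ A then f (A - (m + 1)) else 0) = ∑ a ∈ range A, f a := by
  rw [tsum_eq_sum (s := range A), ← Finset.sum_range_reflect]
  · refine Finset.sum_congr rfl fun m hm => ?_
    have := Finset.mem_range.1 hm
    rw [if_pos (by omega)]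
    congr 1
    omega
  · intro b hb
    rw [if_neg]
    simpa using hb

lemma PS_snoc_castSucc {n : ℕ} (d : Fin n → Bool × ℕ × ℕ) (x : Bool × ℕ × ℕ) (i : Fin n) :
    PS (fun i => (Fin.snoc (α := fun _ => Bool × ℕ × ℕ) d x i).2.1) ((i : ℕ) + 1) =
      PS (fun i => (d i).2.1) ((i : ℕ) + 1) := by
  unfold PS
  rw [Finset.sum_filter, Finset.sum_filter, Fin.sum_univ_castSucc]
  have : ¬ (n < (i : ℕ) + 1) := by omega
  simp [this]

lemma PS_total {n : ℕ} (l w A B : ℕ) (d : Fin n → Bool × ℕ × ℕ) (h : cond l w A B d) (N : ℕ)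
    (hN : n ≤ N) : PS (fun i => (d i).2.1) N = A + B := by
  unfold PS
  obtain ⟨_, h2, h3, _⟩ := h
  rw [← h2, ← h3, ← Finset.sum_add_distrib, Finset.filter_true_of_mem (fun i _ => by omega)]
  refine Finset.sum_congr rfl fun i _ => ?_
  split_ifs <;> simp

lemma term_snoc {n : ℕ} (l w A B : ℕ) (d : Fin n → Bool × ℕ × ℕ) (x : Bool × ℕ × ℕ)
    (h : cond l w A B (Fin.snoc (α := fun _ => Bool × ℕ × ℕ) d x)) :
    term (Fin.snoc (α := fun _ => Bool × ℕ × ℕ) d x) =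
      (((A + B : ℕ) : ℝ≥0) ^ (x.2.2 + 1))⁻¹ * term d := by
  unfold term
  rw [Fin.prod_univ_castSucc, mul_comm]
  congr 1
  · rw [PS_total l w A B _ h _ (by simp)]
    simp
  · refine Finset.prod_congr rfl fun i _ => ?_
    have := PS_snoc_castSucc d x i
    simp only [Fin.val_castSucc, Fin.snoc_castSucc] at this ⊢
    rw [this]

lemma cond_snoc_true {n : ℕ} (l w A B m e : ℕ) (d : Fin n → Bool × ℕ × ℕ) :
    cond (l + 1) w A B (Fin.snoc (α := fun _ => Bool × ℕ × ℕ) d (true, m, e)) ↔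
      m + 1 ≤ A ∧ e = w ∧ cond l 0 (A - (m + 1)) B d := by
  unfold cond
  simp only [Fin.sum_univ_castSucc, Fin.snoc_castSucc, Fin.snoc_last, if_true]
  constructor
  · rintro ⟨h1, h2, h3, h4, h5⟩
    have h0 : ∀ i, (d i).2.2 = 0 := fun i => by
      have := h5 i.castSucc (Fin.last n) (Fin.castSucc_lt_last i) (by simp)
      simpa using this
    have hs : ∑ i, (d i).2.2 = 0 := Finset.sum_eq_zero fun i _ => h0 i
    refine ⟨by omega, by omega, by omega, by omega, by omega, hs, fun i _ _ _ => h0 i⟩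
  · rintro ⟨h1, h2, h3, h4, h5, h6, h7⟩
    have h0 : ∀ i, (d i).2.2 = 0 := fun i => by
      simpa using (Finset.sum_eq_zero_iff.1 h6) i (Finset.mem_univ i)
    refine ⟨by omega, by omega, by omega, by omega, fun i => ?_⟩
    refine Fin.lastCases (fun j hj => ?_) (fun i j hj _ => ?_) i
    · exact absurd hj (not_lt.2 (Fin.le_last _))
    · simpa using h0 i

lemma cond_snoc_true_zero {n : ℕ} (w A B m e : ℕ) (d : Fin n → Bool × ℕ × ℕ) :
    ¬ cond 0 w A B (Fin.snoc (α := fun _ => Bool × ℕ × ℕ) d (true, m, e)) := by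
  unfold cond
  simp only [Fin.sum_univ_castSucc, Fin.snoc_castSucc, Fin.snoc_last, if_true]
  rintro ⟨h1, -⟩
  omega

lemma cond_snoc_false {n : ℕ} (l w A B m e : ℕ) (d : Fin n → Bool × ℕ × ℕ) :
    cond l w A B (Fin.snoc (α := fun _ => Bool × ℕ × ℕ) d (false, m, e)) ↔
      m + 1 ≤ B ∧ e ≤ w ∧ cond l (w - e) A (B - (m + 1)) d := by
  unfold cond
  simp only [Fin.sum_univ_castSucc, Fin.snoc_castSucc, Fin.snoc_last]
  simp only [Bool.false_eq_true, if_false, add_zero]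
  constructor
  · rintro ⟨h1, h2, h3, h4, h5⟩
    refine ⟨by omega, by omega, by omega, by omega, by omega, by omega, fun i j hij hj => ?_⟩
    have := h5 i.castSucc j.castSucc (by simpa using hij) (by simpa using hj)
    simpa using this
  · rintro ⟨h1, h2, h3, h4, h5, h6, h7⟩
    refine ⟨by omega, by omega, by omega, by omega, fun i j => ?_⟩
    refine Fin.lastCases (fun hj => ?_) (fun j => ?_) j
    · intro h; simp at h
    · refine Fin.lastCases (fun hj => ?_) (fun i hj hh => ?_) i
      · exact absurd hj (not_lt.2 (Fin.le_last _))
      · simp only [Fin.snoc_castSucc] at hh ⊢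
        exact h7 i j (by simpa using hj) hh

/-- the part of the recursion where the last index lies outside of `J` -/
lemma T_false (n l w A B : ℕ) : (∑' (x : ℕ × ℕ) (d : Fin n → Bool × ℕ × ℕ), open Classical in
      if cond l w A B (Fin.snoc (α := fun _ => Bool × ℕ × ℕ) d (false, x)) then
        (term (Fin.snoc (α := fun _ => Bool × ℕ × ℕ) d (false, x)) : ℝ≥0∞) else 0) =
    ∑ b ∈ range B, ∑ e ∈ range (w + 1),
      ((((A + B : ℕ) : ℝ≥0) ^ (e + 1))⁻¹ : ℝ≥0) * T n l (w - e) A b := by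
  classical
  rw [ENNReal.tsum_prod', ← tsum_sub]
  refine tsum_congr fun m => ?_
  by_cases hm : m + 1 ≤ B
  · rw [if_pos hm, tsum_eq_sum (s := range (w + 1))]
    · refine Finset.sum_congr rfl fun e he => ?_
      have he := Finset.mem_range.1 he
      rw [T, ← ENNReal.tsum_mul_left]
      refine tsum_congr fun d => ?_
      by_cases hc : cond l w A B (Fin.snoc (α := fun _ => Bool × ℕ × ℕ) d (false, m, e))
      · rw [if_pos hc, if_pos ((cond_snoc_false ..).1 hc).2.2, term_snoc l w A B d _ hc]
        push_cast
        rfl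
      · rw [if_neg hc, if_neg, mul_zero]
        intro h
        exact hc ((cond_snoc_false ..).2 ⟨hm, by omega, h⟩)
    · intro e he
      rw [ENNReal.tsum_eq_zero]
      intro d
      rw [if_neg]
      rw [cond_snoc_false]
      intro h
      apply he
      rw [Finset.mem_range]
      omega
  · rw [if_neg hm, ENNReal.tsum_eq_zero]
    intro e
    rw [ENNReal.tsum_eq_zero]
    intro d
    rw [if_neg]
    rw [cond_snoc_false]
    exact fun h => hm h.1

lemma T_true (n l w A B : ℕ) : (∑' (x : ℕ × ℕ) (d : Fin n → Bool × ℕ × ℕ), open Classical in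
      if cond (l + 1) w A B (Fin.snoc (α := fun _ => Bool × ℕ × ℕ) d (true, x)) then
        (term (Fin.snoc (α := fun _ => Bool × ℕ × ℕ) d (true, x)) : ℝ≥0∞) else 0) =
    ∑ a ∈ range A,
      ((((A + B : ℕ) : ℝ≥0) ^ (w + 1))⁻¹ : ℝ≥0) * T n l 0 a B := by
  classical
  rw [ENNReal.tsum_prod', ← tsum_sub]
  refine tsum_congr fun m => ?_
  by_cases hm : m + 1 ≤ A
  · rw [if_pos hm, tsum_eq_single w]
    · rw [T, ← ENNReal.tsum_mul_left]
      refine tsum_congr fun d => ?_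
      by_cases hc : cond (l + 1) w A B (Fin.snoc (α := fun _ => Bool × ℕ × ℕ) d (true, m, w))
      · rw [if_pos hc, if_pos ((cond_snoc_true ..).1 hc).2.2, term_snoc (l + 1) w A B d _ hc]
        push_cast
        rfl
      · rw [if_neg hc, if_neg, mul_zero]
        intro h
        exact hc ((cond_snoc_true ..).2 ⟨hm, rfl, h⟩)
    · intro e he
      rw [ENNReal.tsum_eq_zero]
      intro d
      rw [if_neg]
      rw [cond_snoc_true]
      exact fun h => he h.2.1
  · rw [if_neg hm, ENNReal.tsum_eq_zero]
    intro e
    rw [ENNReal.tsum_eq_zero]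
    intro d
    rw [if_neg]
    rw [cond_snoc_true]
    exact fun h => hm h.1

lemma T_succ (n l w A B : ℕ) : T (n + 1) (l + 1) w A B =
    ∑ b ∈ range B, ∑ e ∈ range (w + 1),
      ((((A + B : ℕ) : ℝ≥0) ^ (e + 1))⁻¹ : ℝ≥0) * T n (l + 1) (w - e) A b +
    ∑ a ∈ range A, ((((A + B : ℕ) : ℝ≥0) ^ (w + 1))⁻¹ : ℝ≥0) * T n l 0 a B := by
  rw [T, tsum_snoc, ENNReal.tsum_prod', tsum_bool, T_false, T_true]

lemma T_succ_zero (n w A B : ℕ) : T (n + 1) 0 w A B =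
    ∑ b ∈ range B, ∑ e ∈ range (w + 1),
      ((((A + B : ℕ) : ℝ≥0) ^ (e + 1))⁻¹ : ℝ≥0) * T n 0 (w - e) A b := by
  rw [T, tsum_snoc, ENNReal.tsum_prod', tsum_bool, T_false]
  rw [ENNReal.tsum_eq_zero.2, add_zero]
  rintro ⟨m, e⟩
  simp [cond_snoc_true_zero]

lemma T_zero (A B : ℕ) : T 0 0 0 A B = ((Z 0 A * Z 0 B : ℝ≥0) : ℝ≥0∞) := by
  classical
  rw [T, tsum_eq_single default (by intro b hb; exact absurd (Subsingleton.elim _ _) hb)]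
  by_cases hA : A = 0 <;> by_cases hB : B = 0 <;>
  simp [cond, term, Z, hA, hB, eq_comm (a := 0)]

lemma T_big (n l w A B : ℕ) (h : n < l) : T n l w A B = 0 := by
  classical
  rw [T, ENNReal.tsum_eq_zero]
  intro d
  rw [if_neg]
  rintro ⟨h1, -⟩
  have : (∑ i, if (d i).1 = true then 1 else 0) ≤ ∑ i : Fin n, 1 :=
    Finset.sum_le_sum fun i _ => by split_ifs <;> simp
  simp only [Finset.sum_const, Finset.card_univ, Fintype.card_fin, smul_eq_mul, mul_one] at this
  omega

lemma Z_succ_mul (l A : ℕ) : ∑ a ∈ range A, Z l a = A * Z (l + 1) A := by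
  rw [Z]
  rcases Nat.eq_zero_or_pos A with rfl | h
  · simp
  · rw [mul_inv_cancel_left₀]
    positivity

lemma key (w A B : ℕ) (hA : 0 < A) (hB : 0 < B) :
    (B : ℝ≥0) * ∑ e ∈ range (w + 1), (((A + B : ℕ) : ℝ≥0) ^ (e + 1))⁻¹ * ((A : ℝ≥0)⁻¹) ^ (w - e)
      + A * (((A + B : ℕ) : ℝ≥0) ^ (w + 1))⁻¹ = ((A : ℝ≥0)⁻¹) ^ w := by
  rw [← NNReal.coe_inj]
  push_cast
  have hA' : (0 : ℝ) < A := by exact_mod_cast hA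
  have hB' : (0 : ℝ) < B := by exact_mod_cast hB
  induction w with
  | zero => simp; field_simp; ring
  | succ w ih =>
    rw [Finset.sum_range_succ]
    have : ∑ e ∈ range (w + 1), (((A : ℝ) + B) ^ (e + 1))⁻¹ * ((A : ℝ)⁻¹) ^ (w + 1 - e) =
        (∑ e ∈ range (w + 1), (((A : ℝ) + B) ^ (e + 1))⁻¹ * ((A : ℝ)⁻¹) ^ (w - e)) * (A : ℝ)⁻¹ := by
      rw [Finset.sum_mul]
      refine Finset.sum_congr rfl fun e he => ?_
      have he := Finset.mem_range.1 he
      rw [show w + 1 - e = w - e + 1 by omega, pow_succ (A : ℝ)⁻¹, mul_assoc]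
    rw [this, pow_succ (A : ℝ)⁻¹, ← ih]
    simp only [Nat.sub_self, pow_zero, mul_one]
    field_simp
    ring

lemma T_eq (n : ℕ) : ∀ (l r w A B : ℕ), n = l + r → (l = 0 → w = 0) →
    T n l w A B = ((((A : ℝ≥0)⁻¹) ^ w * Z l A * Z r B : ℝ≥0) : ℝ≥0∞) := by
  induction n with
  | zero =>
    intro l r w A B h hw
    obtain rfl : l = 0 := by omega
    obtain rfl : r = 0 := by omega
    obtain rfl := hw rfl
    rw [T_zero]; simp
  | succ n ih =>
    intro l r w A B h hw
    rcases l with _ | l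
    · obtain rfl := hw rfl
      obtain ⟨r, rfl⟩ : ∃ r', r = r' + 1 := ⟨r - 1, by omega⟩
      rw [T_succ_zero]
      simp only [zero_add, Finset.sum_range_one, Nat.sub_zero]
      rw [Finset.sum_congr rfl fun b _ => by rw [ih 0 r 0 A b (by omega) (fun _ => rfl)]]
      by_cases hA : A = 0
      · subst hA
        simp only [pow_one, pow_zero, one_mul, zero_add, Z, if_true]
        push_cast
        rw [Finset.mul_sum]
      · simp [Z, hA]
    · rw [T_succ]
      rw [Finset.sum_congr rfl fun a (_ : a ∈ range A) => by
        rw [ih l r 0 a B (by omega) (fun _ => rfl)]]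
      rcases r with _ | r
      · rw [Finset.sum_congr rfl fun b (_ : b ∈ range B) => Finset.sum_congr rfl fun e _ => by
          rw [T_big n (l + 1) _ A b (by omega)]]
        simp only [mul_zero, Finset.sum_const_zero, zero_add]
        simp only [← ENNReal.coe_mul, ← ENNReal.ofNNReal_finsetSum, ← ENNReal.coe_add, ENNReal.coe_inj]
        by_cases hB : B = 0
        · subst hB
          simp only [pow_zero, one_mul, Z, if_true, mul_one, add_zero]
          rw [← Finset.mul_sum, pow_succ, mul_inv, mul_assoc, inv_pow]
        · simp [Z, hB]
      · rw [Finset.sum_congr rfl fun b (_ : b ∈ range B) => Finset.sum_congr rfl fun e _ => by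
          rw [ih (l + 1) r _ A b (by omega) (by omega)]]
        simp only [← ENNReal.coe_mul, ← ENNReal.ofNNReal_finsetSum, ← ENNReal.coe_add, ENNReal.coe_inj]
        have e1 : ∑ b ∈ range B, ∑ e ∈ range (w + 1), (((A + B : ℕ) : ℝ≥0) ^ (e + 1))⁻¹ *
            (((A : ℝ≥0)⁻¹) ^ (w - e) * Z (l + 1) A * Z r b) =
            (∑ e ∈ range (w + 1), (((A + B : ℕ) : ℝ≥0) ^ (e + 1))⁻¹ * ((A : ℝ≥0)⁻¹) ^ (w - e)) *
              Z (l + 1) A * (B * Z (r + 1) B) := by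
          rw [← Z_succ_mul, Finset.mul_sum]
          refine Finset.sum_congr rfl fun b _ => ?_
          rw [Finset.sum_mul, Finset.sum_mul]
          refine Finset.sum_congr rfl fun e _ => ?_
          ring
        have e2 : ∑ a ∈ range A, (((A + B : ℕ) : ℝ≥0) ^ (w + 1))⁻¹ *
            (((a : ℝ≥0)⁻¹) ^ 0 * Z l a * Z (r + 1) B) =
            (((A + B : ℕ) : ℝ≥0) ^ (w + 1))⁻¹ * (A * Z (l + 1) A) * Z (r + 1) B := by
          rw [← Z_succ_mul, Finset.mul_sum, Finset.sum_mul]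
          refine Finset.sum_congr rfl fun e _ => ?_
          ring
        rw [e1, e2]
        rcases Nat.eq_zero_or_pos A with rfl | hA
        · simp [Z]
        rcases Nat.eq_zero_or_pos B with rfl | hB
        · simp [Z]
        rw [← key w A B hA hB]
        ring

lemma telescope (c m : ℕ) (hc : 1 ≤ c) (hm : 1 ≤ m) :
    HasSum (fun j : ℕ => (((c + j : ℕ) : ℝ) * ((m + (c + j) : ℕ) : ℝ))⁻¹)
      ((m : ℝ)⁻¹ * ∑ i ∈ range m, ((c + i : ℕ) : ℝ)⁻¹) := by
  rw [hasSum_iff_tendsto_nat_of_nonneg (fun j => by positivity)]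
  have hm' : (m : ℝ) ≠ 0 := by positivity
  have hpart : ∀ N : ℕ, ∑ j ∈ range N, (((c + j : ℕ) : ℝ) * ((m + (c + j) : ℕ) : ℝ))⁻¹ =
      (m : ℝ)⁻¹ * (∑ i ∈ range m, ((c + i : ℕ) : ℝ)⁻¹ - ∑ i ∈ range m, ((c + N + i : ℕ) : ℝ)⁻¹) := by
    intro N
    induction N with
    | zero => simp
    | succ N ih =>
      rw [Finset.sum_range_succ, ih]
      have h1 := Finset.sum_range_succ (fun i => ((c + N + i : ℕ) : ℝ)⁻¹) m
      have h2 := Finset.sum_range_succ' (fun i => ((c + N + i : ℕ) : ℝ)⁻¹) m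
      have h3 : ∑ i ∈ range m, ((c + N + (i + 1) : ℕ) : ℝ)⁻¹ =
          ∑ i ∈ range m, ((c + (N + 1) + i : ℕ) : ℝ)⁻¹ :=
        Finset.sum_congr rfl fun i _ => by congr 2; omega
      rw [h3] at h2
      have h4 : ∑ i ∈ range m, ((c + N + i : ℕ) : ℝ)⁻¹ =
          ∑ i ∈ range m, ((c + (N + 1) + i : ℕ) : ℝ)⁻¹ + ((c + N + 0 : ℕ) : ℝ)⁻¹
            - ((c + N + m : ℕ) : ℝ)⁻¹ := by linarith
      rw [h4]
      have h5 : (((c + N : ℕ) : ℝ) * ((m + (c + N) : ℕ) : ℝ))⁻¹ =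
          (m : ℝ)⁻¹ * (((c + N + 0 : ℕ) : ℝ)⁻¹ - ((c + N + m : ℕ) : ℝ)⁻¹) := by
        have : (0 : ℝ) < c + N := by positivity
        push_cast
        field_simp
        ring
      rw [h5]
      ring
  simp_rw [hpart]
  have h0 : Filter.Tendsto (fun N : ℕ => ∑ i ∈ range m, ((c + N + i : ℕ) : ℝ)⁻¹) Filter.atTop
      (nhds (∑ i ∈ range m, 0)) := by
    refine tendsto_finsetSum _ fun i _ => ?_
    refine Filter.Tendsto.comp tendsto_inv_atTop_zero ?_
    refine tendsto_natCast_atTop_atTop.comp ?_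
    exact Filter.tendsto_atTop_mono (fun N => by simp only [id]; omega) Filter.tendsto_id
  have := (h0.const_sub (∑ i ∈ range m, ((c + i : ℕ) : ℝ)⁻¹)).const_mul (m : ℝ)⁻¹
  simpa using this

lemma telescope' (c m : ℕ) (hc : 1 ≤ c) (hm : 1 ≤ m) :
    ∑' j : ℕ, (((((c + j : ℕ) : ℝ≥0) * ((m + (c + j) : ℕ) : ℝ≥0))⁻¹ : ℝ≥0) : ℝ≥0∞) =
      (((m : ℝ≥0)⁻¹ * ∑ i ∈ range m, ((c + i : ℕ) : ℝ≥0)⁻¹ : ℝ≥0) : ℝ≥0∞) := by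
  have h := telescope c m hc hm
  apply HasSum.tsum_eq
  rw [ENNReal.hasSum_coe, ← NNReal.hasSum_coe]
  push_cast
  push_cast at h
  exact h

lemma G_eq (r : ℕ) : ∀ m : ℕ, 1 ≤ m →
    ∑' B : ℕ, ((Z r B * ((m + B : ℕ) : ℝ≥0)⁻¹ : ℝ≥0) : ℝ≥0∞) =
      ((W r m * (m : ℝ≥0)⁻¹ : ℝ≥0) : ℝ≥0∞) := by
  induction r with
  | zero =>
    intro m hm
    rw [tsum_eq_single 0]
    · simp [Z, W]
    · intro b hb; simp [Z, hb]
  | succ r ih =>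
    intro m hm
    have h1 : ∀ B : ℕ, ((Z (r + 1) B * ((m + B : ℕ) : ℝ≥0)⁻¹ : ℝ≥0) : ℝ≥0∞) =
        ∑' b : ℕ, if b < B then
          ((Z r b * (((B : ℕ) : ℝ≥0) * ((m + B : ℕ) : ℝ≥0))⁻¹ : ℝ≥0) : ℝ≥0∞) else 0 := by
      intro B
      rw [tsum_eq_sum (s := range B)]
      · rw [Finset.sum_congr rfl fun b hb => if_pos (Finset.mem_range.1 hb)]
        simp only [← ENNReal.coe_mul, ← ENNReal.ofNNReal_finsetSum, ← ENNReal.coe_add, ENNReal.coe_inj]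
        rw [Z, ← Finset.sum_mul, mul_inv]
        ring
      · intro b hb
        rw [if_neg (by simpa using hb)]
    rw [tsum_congr h1, ENNReal.tsum_comm]
    have h2 : ∀ b : ℕ, (∑' B : ℕ, if b < B then
          ((Z r b * (((B : ℕ) : ℝ≥0) * ((m + B : ℕ) : ℝ≥0))⁻¹ : ℝ≥0) : ℝ≥0∞) else 0) =
        ∑ i ∈ range m, ((m : ℝ≥0)⁻¹ : ℝ≥0) *
          ((Z r b * ((i + 1 + b : ℕ) : ℝ≥0)⁻¹ : ℝ≥0) : ℝ≥0∞) := by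
      intro b
      have hinj : Function.Injective (fun j : ℕ => b + 1 + j) := fun x y h => by simpa using h
      rw [← hinj.tsum_eq]
      · rw [tsum_congr (fun j => if_pos (show b < b + 1 + j by omega))]
        simp only [ENNReal.coe_mul (Z r b)]
        rw [ENNReal.tsum_mul_left, telescope' (b + 1) m (by omega) hm]
        simp only [← ENNReal.coe_mul, ← ENNReal.ofNNReal_finsetSum, ← ENNReal.coe_add, ENNReal.coe_inj]
        rw [Finset.mul_sum, Finset.mul_sum]
        refine Finset.sum_congr rfl fun i _ => ?_
        rw [show b + 1 + i = i + 1 + b by omega]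
        ring
      · intro B hB
        have : b < B := by
          by_contra h
          simp [h] at hB
        exact ⟨B - (b + 1), by simp only []; omega⟩
    rw [tsum_congr h2, Summable.tsum_finsetSum (fun _ _ => ENNReal.summable)]
    rw [Finset.sum_congr rfl fun i _ => by rw [ENNReal.tsum_mul_left, ih (i + 1) (by omega)]]
    simp only [← ENNReal.coe_mul, ← ENNReal.ofNNReal_finsetSum, ← ENNReal.coe_add, ENNReal.coe_inj]
    rw [W, Finset.sum_mul]
    refine Finset.sum_congr rfl fun i _ => ?_
    push_cast
    ring

/-- Conditions for the right-hand side chains, with separate bounds. -/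
def qc {N : ℕ} (a M m : ℕ) (q : Fin N → ℕ) : Prop :=
  (∀ i : Fin N, (i : ℕ) < a → q i + 1 < M) ∧
  (∀ i j : Fin N, (i : ℕ) < (j : ℕ) → (j : ℕ) < a → q j < q i) ∧
  (∀ i j : Fin N, a ≤ (i : ℕ) → (i : ℕ) ≤ (j : ℕ) → q i ≤ q j) ∧
  (∀ i : Fin N, a ≤ (i : ℕ) → q i + 1 ≤ m)

open Classical in
/-- Chain sums on the right-hand side. -/
def V (N a M m : ℕ) : ℝ≥0∞ :=
  ∑' q : Fin N → ℕ, if qc a M m q then ((∏ i, ((q i : ℝ≥0) + 1)⁻¹ : ℝ≥0) : ℝ≥0∞) else 0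

lemma qc_snoc {N : ℕ} (a M m x : ℕ) (ha : a ≤ N) (q : Fin N → ℕ) :
    qc a M m (Fin.snoc (α := fun _ => ℕ) q x) ↔ x < m ∧ qc a M (x + 1) q := by
  unfold qc
  simp only [Fin.forall_fin_succ', Fin.snoc_castSucc, Fin.snoc_last, Fin.val_castSucc, Fin.val_last]
  constructor
  · rintro ⟨⟨h1, -⟩, ⟨h2, -⟩, ⟨h3, -⟩, ⟨h4, h5⟩⟩
    refine ⟨by have := h5 ha; omega, h1, fun i j => (h2 i).1 j, fun i j => (h3 i).1 j, fun i hi => ?_⟩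
    have := (h3 i).2 hi (by omega)
    omega
  · rintro ⟨h0, h1, h2, h3, h4⟩
    refine ⟨⟨h1, fun h => by omega⟩, ⟨fun i => ⟨h2 i, fun _ h => by omega⟩,
      ⟨fun i h => by omega, fun h => by omega⟩⟩,
      ⟨fun i => ⟨h3 i, fun h _ => by have := h4 i h; omega⟩, ⟨fun i _ h => by omega, fun _ _ => le_rfl⟩⟩,
      fun i hi => by have := h4 i hi; omega, fun _ => by omega⟩

lemma qc_cons {a : ℕ} (M m x : ℕ) (q : Fin a → ℕ) :
    qc (a + 1) M m (Fin.cons (α := fun _ => ℕ) x q) ↔ x < M - 1 ∧ qc a (x + 1) m q := by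
  unfold qc
  simp only [Fin.forall_fin_succ, Fin.cons_succ, Fin.cons_zero, Fin.val_succ, Fin.val_zero]
  constructor
  · rintro ⟨⟨h0, h1⟩, ⟨⟨-, h2⟩, h3⟩, -⟩
    refine ⟨by have := h0 (by omega); omega, fun i hi => ?_, fun i j hij hj => ?_,
      fun i => by omega, fun i => by omega⟩
    · have := h2 i (by omega) (by omega); omega
    · exact (h3 i).2 j (by omega) (by omega)
  · rintro ⟨h0, h1, h2, -⟩
    refine ⟨⟨fun _ => by omega, fun i hi => ?_⟩, ⟨⟨fun h => by omega, fun j _ _ => ?_⟩,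
      fun i => ⟨fun h => by omega, fun j h1 h3 => h2 i j (by omega) (by omega)⟩⟩,
      ⟨⟨fun h => by omega, fun i h => by omega⟩,
        fun i => ⟨fun h => by omega, fun j h => by omega⟩⟩,
      ⟨fun h => by omega, fun i => by omega⟩⟩
    · have := h1 i (by omega); omega
    · have := h1 j (by omega); omega

lemma V_snoc (N a M m : ℕ) (ha : a ≤ N) : V (N + 1) a M m =
    ∑ x ∈ range m, (((x : ℝ≥0) + 1)⁻¹ : ℝ≥0) * V N a M (x + 1) := by
  classical
  rw [V, tsum_snoc, tsum_eq_sum (s := range m)]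
  · refine Finset.sum_congr rfl fun x hx => ?_
    rw [V, ← ENNReal.tsum_mul_left]
    refine tsum_congr fun q => ?_
    have hx := Finset.mem_range.1 hx
    simp only [qc_snoc a M m x ha q, hx, true_and]
    split_ifs
    · rw [Fin.prod_univ_castSucc, mul_comm]
      simp only [Fin.snoc_castSucc, Fin.snoc_last, ENNReal.coe_mul]
    · simp
  · intro x hx
    have hx : ¬ x < m := by simpa using hx
    rw [ENNReal.tsum_eq_zero]
    intro q
    simp [qc_snoc a M m x ha q, hx]

lemma V_cons (a M m : ℕ) : V (a + 1) (a + 1) M m =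
    ∑ x ∈ range (M - 1), (((x : ℝ≥0) + 1)⁻¹ : ℝ≥0) * V a a (x + 1) m := by
  classical
  rw [V, tsum_cons, tsum_eq_sum (s := range (M - 1))]
  · refine Finset.sum_congr rfl fun x hx => ?_
    rw [V, ← ENNReal.tsum_mul_left]
    refine tsum_congr fun q => ?_
    have hx := Finset.mem_range.1 hx
    simp only [qc_cons M m x q, hx, true_and]
    split_ifs
    · rw [Fin.prod_univ_succ]
      simp only [Fin.cons_succ, Fin.cons_zero, ENNReal.coe_mul]
    · simp
  · intro x hx
    have hx : ¬ x < M - 1 := by simpa using hx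
    rw [ENNReal.tsum_eq_zero]
    intro q
    simp [qc_cons M m x q, hx]

lemma V_diag (a : ℕ) : ∀ M m : ℕ, 1 ≤ M → V a a M m = ((∑ x ∈ range M, Z a x : ℝ≥0) : ℝ≥0∞) := by
  classical
  induction a with
  | zero =>
    intro M m hM
    rw [V, tsum_eq_single default (by intro b hb; exact absurd (Subsingleton.elim _ _) hb)]
    have : M ≠ 0 := by omega
    simp [qc, Z, this]
  | succ a ih =>
    intro M m hM
    rw [V_cons]
    obtain ⟨M, rfl⟩ : ∃ M', M = M' + 1 := ⟨M - 1, by omega⟩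
    rw [Finset.sum_congr rfl fun x _ => by rw [ih (x + 1) m (by omega)]]
    rw [Finset.sum_range_succ']
    simp only [← ENNReal.coe_mul, ← ENNReal.ofNNReal_finsetSum, ENNReal.coe_inj]
    simp [Z]

lemma V_eq (a r M : ℕ) (hM : 1 ≤ M) : ∀ m : ℕ,
    V (a + r) a M m = ((M * Z (a + 1) M * W r m : ℝ≥0) : ℝ≥0∞) := by
  induction r with
  | zero =>
    intro m
    rw [← Z_succ_mul, W, mul_one]
    exact V_diag a M m hM
  | succ r ih =>
    intro m
    rw [← add_assoc, V_snoc _ _ _ _ (by omega), Finset.sum_congr rfl fun x _ => by rw [ih (x + 1)]]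
    simp only [← ENNReal.coe_mul, ← ENNReal.ofNNReal_finsetSum, ENNReal.coe_inj]
    rw [W, Finset.mul_sum]
    refine Finset.sum_congr rfl fun x _ => ?_
    ring

lemma Q_eq (a r m : ℕ) (hm : 1 ≤ m) :
    ∑ q ∈ Qset (a + r + 1) m (a + 1), ∏ i : Fin (a + r + 1 - 1), ((q i : ℝ≥0) + 1)⁻¹ =
      m * Z (a + 1) m * W r m := by
  classical
  rw [← ENNReal.coe_inj, ← V_eq a r m hm m, V]
  refine Eq.trans ?_ (tsum_eq_sum (s := (show Finset (Fin (a + r) → ℕ) from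
    Qset (a + r + 1) m (a + 1))) ?_).symm
  · rw [ENNReal.ofNNReal_finsetSum]
    refine Finset.sum_congr rfl fun q hq => ?_
    rw [if_pos]
    · rfl
    · exact (Finset.mem_filter.1 hq).2
  · intro q hq
    rw [if_neg]
    intro h
    apply hq
    refine Finset.mem_filter.2 ⟨?_, h⟩
    rw [Fintype.mem_piFinset]
    intro i
    rw [Finset.mem_range]
    by_cases hi : (i : ℕ) < a
    · have := h.1 i hi; omega
    · have := h.2.2.2 i (by omega); omega

/-- The condition on the left-hand side. -/
def PL (n k m l : ℕ) (p : Finset (Fin n) × (Fin n → ℕ) × (Fin n → ℕ)) : Prop :=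
  p.1.card = l ∧ p.2.1 ∈ Ikr n k (p.1.sup fun j => (j : ℕ) + 1) ∧ (∑ j ∈ p.1, (p.2.2 j + 1)) = m

/-- The term on the left-hand side. -/
def tL {n : ℕ} (kv mv : Fin n → ℕ) : ℝ≥0 :=
  (∏ i : Fin n, ((PS mv ((i : ℕ) + 1) : ℕ) : ℝ≥0) ^ kv i)⁻¹

/-- The change of variables. -/
def phi {n : ℕ} (d : Fin n → Bool × ℕ × ℕ) : Finset (Fin n) × (Fin n → ℕ) × (Fin n → ℕ) :=
  (univ.filter fun i => (d i).1 = true,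
    fun i => (d i).2.2 + 1 + (if (i : ℕ) = n - 1 then 1 else 0), fun i => (d i).2.1)

lemma phi_inj {n : ℕ} : Function.Injective (phi (n := n)) := by
  intro d d' h
  simp only [phi, Prod.mk.injEq] at h
  obtain ⟨h1, h2, h3⟩ := h
  funext i
  have e1 : (d i).1 = true ↔ (d' i).1 = true := by
    have := Finset.ext_iff.1 h1 i
    simpa using this
  have e2 := congrFun h2 i
  have e3 := congrFun h3 i
  refine Prod.ext (Bool.eq_iff_iff.2 e1) (Prod.ext e3 ?_)
  simpa using e2

lemma phi_surj {n k m l : ℕ} (p : Finset (Fin n) × (Fin n → ℕ) × (Fin n → ℕ))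
    (hp : PL n k m l p) : ∃ d, phi d = p := by
  obtain ⟨J, kv, mv⟩ := p
  obtain ⟨-, h, -⟩ := hp
  obtain ⟨-, h1, h2, -⟩ := Finset.mem_filter.1 h
  refine ⟨fun i => (decide (i ∈ J), mv i, kv i - 1 - (if (i : ℕ) = n - 1 then 1 else 0)), ?_⟩
  simp only [phi, Prod.mk.injEq]
  refine ⟨by ext i; simp, ?_, trivial⟩
  funext i
  have h1 := h1 i
  have h2 := h2 i
  simp only at h1 h2
  split_ifs with hi
  · have := h2 hi
    omega
  · omega

lemma PL_phi {n k m l : ℕ} (hn : 1 ≤ n) (hk : n + 1 ≤ k) (d : Fin n → Bool × ℕ × ℕ) :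
    PL n k m l (phi d) ↔
      cond l (k - n - 1) m (∑ i, if (d i).1 = true then 0 else (d i).2.1 + 1) d := by
  have hsum : ∑ i, ((phi d).2.1 i) = ∑ i, (d i).2.2 + n + 1 := by
    simp only [phi]
    rw [Finset.sum_add_distrib, Finset.sum_add_distrib]
    have : ∀ i : Fin n, (i : ℕ) = n - 1 ↔ i = ⟨n - 1, by omega⟩ := fun i => by
      rw [Fin.ext_iff]
    simp [this]
  have hsup : ∀ i : Fin n, (i : ℕ) + 2 ≤ (phi d).1.sup (fun j => (j : ℕ) + 1) ↔
      ∃ j, i < j ∧ (d j).1 = true := by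
    intro i
    rw [Finset.le_sup_iff (by simp)]
    simp only [phi, Finset.mem_filter, Finset.mem_univ, true_and]
    refine exists_congr fun j => ?_
    rw [Fin.lt_def, and_comm]
    refine and_congr_left fun _ => by omega
  unfold PL cond Ikr
  rw [Finset.mem_filter, hsum]
  simp only [hsup]
  have hc : (phi d).1.card = ∑ i, if (d i).1 = true then 1 else 0 := by
    simp [phi]
  have hm : ∑ j ∈ (phi d).1, ((phi d).2.2 j + 1) =
      ∑ i, if (d i).1 = true then (d i).2.1 + 1 else 0 := by
    simp only [phi]
    rw [Finset.sum_filter]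
  rw [hc, hm]
  constructor
  · rintro ⟨h1, ⟨-, -, -, h2, h3⟩, h4⟩
    refine ⟨h1, h4, trivial, by omega, fun i j hij hj => ?_⟩
    have := h3 i ⟨j, hij, hj⟩
    simp only [phi] at this
    omega
  · rintro ⟨h1, h4, -, h2, h3⟩
    refine ⟨h1, ⟨?_, ?_, ?_, by omega, ?_⟩, h4⟩
    · rw [Fintype.mem_piFinset]
      intro i
      have : (phi d).2.1 i ≤ ∑ i, (phi d).2.1 i :=
        Finset.single_le_sum (f := (phi d).2.1) (fun _ _ => Nat.zero_le _) (Finset.mem_univ i)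
      rw [Finset.mem_range]
      omega
    · intro i
      simp only [phi]
      omega
    · intro i hi
      simp only [phi, hi, if_true]
      omega
    · rintro i ⟨j, hij, hj⟩
      have h5 := h3 i j hij hj
      have h6 : ¬ (i : ℕ) = n - 1 := by
        have := Fin.lt_def.1 hij
        omega
      simp only [phi, h5, h6, if_false]

lemma tL_phi {n l w A B : ℕ} (hn : 1 ≤ n) (d : Fin n → Bool × ℕ × ℕ) (h : cond l w A B d) :
    tL (phi d).2.1 (phi d).2.2 = term d * ((A + B : ℕ) : ℝ≥0)⁻¹ := by
  unfold tL term
  simp only [phi]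
  simp only [pow_add _ (_ + 1)]
  rw [Finset.prod_mul_distrib, mul_inv, ← Finset.prod_inv_distrib]
  congr 2
  rw [Finset.prod_eq_single (⟨n - 1, by omega⟩ : Fin n)]
  · simp only [if_true, pow_one]
    rw [PS_total l w A B d h _ (by omega)]
  · intro i _ hi
    have : ¬ (i : ℕ) = n - 1 := fun h => hi (Fin.ext h)
    simp [this]
  · simp

lemma lhs_eq (n k m l : ℕ) (hn : 1 ≤ n) (hk : n + 1 ≤ k) (hm : 1 ≤ m)
    (hl : 1 ≤ l) (hln : l ≤ n) :
    ∑ J ∈ (Finset.univ : Finset (Fin n)).powerset.filter (fun J => J.card = l),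
      ∑ kv ∈ Ikr n k (J.sup fun j => (j : ℕ) + 1),
        ∑' mv : {mv : Fin n → ℕ // (∑ j ∈ J, (mv j + 1)) = m}, (tL kv mv.val : ℝ≥0∞) =
    (((m : ℝ≥0)⁻¹ ^ (k - n - 1) * Z l m * (W (n - l) m * (m : ℝ≥0)⁻¹) : ℝ≥0) : ℝ≥0∞) := by
  classical
  have h1 : ∑ J ∈ (Finset.univ : Finset (Fin n)).powerset.filter (fun J => J.card = l),
      ∑ kv ∈ Ikr n k (J.sup fun j => (j : ℕ) + 1),
        ∑' mv : {mv : Fin n → ℕ // (∑ j ∈ J, (mv j + 1)) = m}, (tL kv mv.val : ℝ≥0∞) =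
      ∑' p : Finset (Fin n) × (Fin n → ℕ) × (Fin n → ℕ),
        if PL n k m l p then (tL p.2.1 p.2.2 : ℝ≥0∞) else 0 := by
    rw [ENNReal.tsum_prod', tsum_eq_sum
      (s := (Finset.univ : Finset (Fin n)).powerset.filter (fun J => J.card = l))]
    · refine Finset.sum_congr rfl fun J hJ => ?_
      have hJ := (Finset.mem_filter.1 hJ).2
      rw [ENNReal.tsum_prod', tsum_eq_sum (s := Ikr n k (J.sup fun j => (j : ℕ) + 1))]
      · refine Finset.sum_congr rfl fun kv hkv => ?_
        have := tsum_subtype {mv : Fin n → ℕ | (∑ j ∈ J, (mv j + 1)) = m}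
          (fun mv => (tL kv mv : ℝ≥0∞))
        refine this.trans (tsum_congr fun mv => ?_)
        rw [Set.indicator_apply]
        simp [PL, hJ, hkv]
      · intro kv hkv
        rw [ENNReal.tsum_eq_zero]
        intro mv
        simp [PL, hkv]
    · intro J hJ
      have hJ : ¬ J.card = l := by simpa using hJ
      rw [ENNReal.tsum_eq_zero]
      intro mv
      simp [PL, hJ]
  rw [h1, ← phi_inj.tsum_eq]
  swap
  · intro p hp
    refine phi_surj (k := k) (m := m) (l := l) p ?_
    by_contra h
    simp [h] at hp
  have h2 : ∀ d : Fin n → Bool × ℕ × ℕ,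
      (if PL n k m l (phi d) then (tL (phi d).2.1 (phi d).2.2 : ℝ≥0∞) else 0) =
      ∑' B : ℕ, (((m + B : ℕ) : ℝ≥0)⁻¹ : ℝ≥0) *
        (if cond l (k - n - 1) m B d then (term d : ℝ≥0∞) else 0) := by
    intro d
    rw [tsum_eq_single (∑ i, if (d i).1 = true then 0 else (d i).2.1 + 1)]
    · simp only [PL_phi hn hk]
      split_ifs with h
      · rw [tL_phi hn d h, ENNReal.coe_mul, mul_comm]
      · simp
    · intro B hB
      rw [if_neg, mul_zero]
      exact fun h => hB h.2.2.1.symm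
  rw [tsum_congr h2, ENNReal.tsum_comm]
  have h3 : ∀ B : ℕ, (∑' d : Fin n → Bool × ℕ × ℕ, (((m + B : ℕ) : ℝ≥0)⁻¹ : ℝ≥0) *
        (if cond l (k - n - 1) m B d then (term d : ℝ≥0∞) else 0)) =
      ((m : ℝ≥0)⁻¹ ^ (k - n - 1) * Z l m : ℝ≥0) *
        ((Z (n - l) B * ((m + B : ℕ) : ℝ≥0)⁻¹ : ℝ≥0) : ℝ≥0∞) := by
    intro B
    rw [ENNReal.tsum_mul_left]
    have := T_eq n l (n - l) (k - n - 1) m B (by omega) (by omega)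
    rw [T] at this
    rw [this]
    simp only [← ENNReal.coe_mul, ENNReal.coe_inj]
    ring
  rw [tsum_congr h3, ENNReal.tsum_mul_left, G_eq _ _ hm, ← ENNReal.coe_mul]

lemma S_eq (n k m : ℕ) (J : Finset (Fin n)) (h : ∀ kv ∈ Ikr n k (J.sup fun j => (j : ℕ) + 1),
    ∑' mv : {mv : Fin n → ℕ // (∑ j ∈ J, (mv j + 1)) = m}, (tL kv mv.val : ℝ≥0∞) ≠ ⊤) :
    S n k m J = (∑ kv ∈ Ikr n k (J.sup fun j => (j : ℕ) + 1),
        ∑' mv : {mv : Fin n → ℕ // (∑ j ∈ J, (mv j + 1)) = m},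
          (tL kv mv.val : ℝ≥0∞)).toReal := by
  rw [ENNReal.toReal_sum h, S]
  refine Finset.sum_congr rfl fun kv _ => ?_
  rw [ENNReal.tsum_toReal_eq (fun _ => ENNReal.coe_ne_top)]
  refine tsum_congr fun mv => ?_
  rw [ENNReal.coe_toReal, tL]
  push_cast
  rfl

end FixedCard
end HelperSection

/-- Proposition 3.2 of the paper: for `1 ≤ l ≤ n`,
`∑_{|J|=l} S(k,m,J) = (1/m^{k-n+1}) ∑_{𝐪∈Q_l} 1/(q₁q₂⋯q_{n-1})`. -/
theorem sum_S_fixed_card (n k m l : ℕ) (hn : 1 ≤ n) (hk : n + 1 ≤ k) (hm : 1 ≤ m)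
    (hl : 1 ≤ l) (hln : l ≤ n) :
    ∑ J ∈ (Finset.univ : Finset (Fin n)).powerset.filter (fun J => J.card = l),
      S n k m J
    = ((m : ℝ) ^ (k - n + 1))⁻¹ *
        ∑ q ∈ Qset n m l, ∏ i : Fin (n - 1), ((q i : ℝ) + 1)⁻¹ := by
  have hL := FixedCard.lhs_eq n k m l hn hk hm hl hln
  have htop : ∀ J ∈ (Finset.univ : Finset (Fin n)).powerset.filter (fun J => J.card = l),
      (∑ kv ∈ Ikr n k (J.sup fun j => (j : ℕ) + 1),
        ∑' mv : {mv : Fin n → ℕ // (∑ j ∈ J, (mv j + 1)) = m},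
          (FixedCard.tL kv mv.val : ℝ≥0∞)) ≠ ⊤ := by
    apply ENNReal.sum_ne_top.1
    rw [hL]
    exact ENNReal.coe_ne_top
  rw [Finset.sum_congr rfl fun J hJ =>
    FixedCard.S_eq n k m J (ENNReal.sum_ne_top.1 (htop J hJ)), ← ENNReal.toReal_sum htop, hL]
  obtain ⟨a, rfl⟩ : ∃ a, l = a + 1 := ⟨l - 1, by omega⟩
  obtain ⟨r, rfl⟩ : ∃ r, n = a + r + 1 := ⟨n - (a + 1), by omega⟩
  have hQ := congrArg (fun x : ℝ≥0 => (x : ℝ)) (FixedCard.Q_eq a r m hm)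
  push_cast at hQ
  rw [hQ, ENNReal.coe_toReal, show a + r + 1 - (a + 1) = r by omega]
  obtain ⟨w, rfl⟩ : ∃ w, k = a + r + 1 + 1 + w := ⟨k - (a + r + 1 + 1), by omega⟩
  rw [show a + r + 1 + 1 + w - (a + r + 1) - 1 = w by omega,
    show a + r + 1 + 1 + w - (a + r + 1) + 1 = w + 2 by omega]
  have hm' : (m : ℝ) ≠ 0 := by positivity
  push_cast
  rw [inv_pow]
  field_simp
  ring
end

section
/- Let n, m be positive integers. For 1 ≤ l ≤ n, let Q_l be the set of tuples (q₁,…,q_{n−1}) of positive integers with m > q₁ > ⋯ > q_{l−1} ≥ 1 and 1 ≤ q_l ≤ ⋯ ≤ q_{n−1} ≤ m. Then 1/m^{n−1} = Σ_{l=1}^{n} (−1)^{l−1} Σ_{(q₁,…,q_{n−1})∈Q_l} 1/(q₁ q₂ ⋯ q_{n−1}). -/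
open Finset

/-- Membership condition of `Qset`, with `k = l - 1`, `N = n - 1`. -/
def QA (N m k : ℕ) (q : Fin N → ℕ) : Prop :=
    (∀ i : Fin N, (i : ℕ) < k → q i + 1 < m) ∧
    (∀ i j : Fin N, (i : ℕ) < (j : ℕ) → (j : ℕ) < k → q j < q i) ∧
    (∀ i j : Fin N, k ≤ (i : ℕ) → (i : ℕ) ≤ (j : ℕ) → q i ≤ q j) ∧
    (∀ i : Fin N, k ≤ (i : ℕ) → q i + 1 ≤ m)

/-- Tuples with a valley exactly at position `k`. -/
def QV (N m k : ℕ) (q : Fin N → ℕ) : Prop :=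
    k < N ∧ (∀ i : Fin N, (i : ℕ) ≤ k → q i + 1 < m) ∧
    (∀ i j : Fin N, (i : ℕ) < (j : ℕ) → (j : ℕ) ≤ k → q j < q i) ∧
    (∀ i j : Fin N, k ≤ (i : ℕ) → (i : ℕ) ≤ (j : ℕ) → q i ≤ q j)

lemma QV_disj (N m k : ℕ) (q : Fin N → ℕ) : ¬ (QV N m k q ∧ QV N m (k+1) q) := by
  rintro ⟨⟨h, _, _, h3⟩, ⟨h', _, g2, _⟩⟩
  have a := h3 ⟨k, h⟩ ⟨k+1, h'⟩ (by simp) (by simp)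
  have b := g2 ⟨k, h⟩ ⟨k+1, h'⟩ (by simp) (by simp)
  omega

lemma QA_succ (N m k : ℕ) (hk : k < N) (q : Fin N → ℕ) (hq : ∀ i, q i < m) :
    QA N m (k+1) q ↔ QV N m k q ∨ QV N m (k+1) q := by
  constructor
  · rintro ⟨h1, h2, h3, h4⟩
    by_cases hc : ∃ h : k + 1 < N, q ⟨k+1, h⟩ < q ⟨k, hk⟩
    · right
      obtain ⟨h, hc⟩ := hc
      have key : ∀ i : Fin N, (i : ℕ) < k + 1 → q ⟨k+1, h⟩ < q i := by
        intro i hi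
        rcases Nat.lt_or_ge i k with h' | h'
        · exact hc.trans (h2 i ⟨k, hk⟩ h' (by simp))
        · have : i = ⟨k, hk⟩ := Fin.ext (by simp; omega)
          rw [this]; exact hc
      refine ⟨h, ?_, ?_, h3⟩
      · intro i hi
        rcases Nat.lt_or_ge i (k+1) with h' | h'
        · exact h1 i h'
        · have : i = ⟨k+1, h⟩ := Fin.ext (by simp; omega)
          rw [this]
          have := h1 ⟨k, hk⟩ (by simp)
          omega
      · intro i j hij hj
        rcases Nat.lt_or_ge j (k+1) with h' | h'
        · exact h2 i j hij h'
        · have : j = ⟨k+1, h⟩ := Fin.ext (by simp; omega)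
          rw [this]
          exact key i (by omega)
    · left
      push Not at hc
      refine ⟨hk, fun i hi => h1 i (by omega), fun i j hij hj => h2 i j hij (by omega), ?_⟩
      intro i j hi hij
      rcases Nat.lt_or_ge k i with h' | h'
      · exact h3 i j h' hij
      · have : i = ⟨k, hk⟩ := Fin.ext (by simp; omega)
        subst this
        rcases Nat.lt_or_ge k j with h' | h'
        · have hN : k + 1 < N := by omega
          exact (hc hN).trans (h3 ⟨k+1, hN⟩ j (by simp) h')
        · have : j = ⟨k, hk⟩ := Fin.ext (by simp; omega)
          rw [this]
  · rintro (⟨_, h1, h2, h3⟩ | ⟨_, h1, h2, h3⟩)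
    · exact ⟨fun i hi => h1 i (by omega), fun i j hij hj => h2 i j hij (by omega),
        fun i j hi hij => h3 i j (by omega) hij, fun i _ => hq i⟩
    · exact ⟨fun i hi => h1 i (by omega), fun i j hij hj => h2 i j hij (by omega),
        fun i j hi hij => h3 i j (by omega) hij, fun i _ => hq i⟩

lemma QA_zero (N m : ℕ) (hm : 1 ≤ m) (q : Fin N → ℕ) (hq : ∀ i, q i < m) :
    QA N m 0 q ↔ q = (fun _ => m - 1) ∨ QV N m 0 q := by
  constructor
  · rintro ⟨h1, h2, h3, h4⟩
    by_cases hc : ∃ h : 0 < N, q ⟨0, h⟩ + 1 < m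
    · right
      obtain ⟨h, hc⟩ := hc
      refine ⟨h, ?_, fun i j hij hj => by omega, h3⟩
      intro i hi
      have : i = ⟨0, h⟩ := Fin.ext (by simp; omega)
      rw [this]; exact hc
    · left
      push Not at hc
      funext i
      have hN : 0 < N := i.pos
      have a := hc hN
      have b := h3 ⟨0, hN⟩ i (by simp) (by simp)
      have c := hq i
      omega
  · rintro (rfl | ⟨_, h1, h2, h3⟩)
    · exact ⟨fun i hi => absurd hi (by omega), fun i j _ hj => absurd hj (by omega), fun i j _ _ => le_rfl,
        fun i _ => hq i⟩
    · exact ⟨fun i hi => by omega, fun i j _ hj => by omega, h3, fun i _ => hq i⟩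

lemma QV_zero_disj (N m : ℕ) (q : Fin N → ℕ) : ¬ (q = (fun _ => m - 1) ∧ QV N m 0 q) := by
  rintro ⟨rfl, h, h1, _⟩
  have := h1 ⟨0, h⟩ (by simp)
  dsimp only at this
  omega

open Classical in
lemma QA_alt (N m : ℕ) (hm : 1 ≤ m) (q : Fin N → ℕ) (hq : ∀ i, q i < m) (K : ℕ) (hK : K ≤ N) :
    ∑ k ∈ Finset.range (K + 1), (-1 : ℝ) ^ k * (if QA N m k q then 1 else 0) =
      (if q = (fun _ => m - 1) then 1 else 0) + (-1) ^ K * (if QV N m K q then 1 else 0) := by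
  induction K with
  | zero =>
    have h1 := QA_zero N m hm q hq
    have h2 := QV_zero_disj N m q
    simp only [zero_add, Finset.sum_range_one, pow_zero, one_mul]
    by_cases a : q = (fun _ => m - 1)
    · have b : ¬ QV N m 0 q := fun b => h2 ⟨a, b⟩
      rw [if_pos (h1.2 (Or.inl a)), if_pos a, if_neg b]; norm_num
    · rw [if_neg a, zero_add]; simp only [h1, a, false_or]
  | succ K ih =>
    rw [Finset.sum_range_succ, ih (by omega)]
    have h1 := QA_succ N m K (by omega) q hq
    have h2 := QV_disj N m K q
    have : (if QA N m (K+1) q then (1:ℝ) else 0) =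
        (if QV N m K q then 1 else 0) + (if QV N m (K+1) q then 1 else 0) := by
      by_cases a : QV N m K q
      · have b : ¬ QV N m (K+1) q := fun b => h2 ⟨a, b⟩
        rw [if_pos (h1.2 (Or.inl a)), if_pos a, if_neg b]; norm_num
      · rw [if_neg a, zero_add]; simp only [h1, a, false_or]
    rw [this, pow_succ]; ring

/-- Equation (3.2) of the paper:
`1/m^{n-1} = ∑_{l=1}^n (-1)^{l-1} ∑_{𝐪∈Q_l} 1/(q₁q₂⋯q_{n-1})`. -/
theorem inclusion_exclusion_Q (n m : ℕ) (hn : 1 ≤ n) (hm : 1 ≤ m) :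
    (1 : ℝ) / (m : ℝ) ^ (n - 1)
    = ∑ l ∈ Finset.Icc 1 n, (-1 : ℝ) ^ (l - 1) *
        ∑ q ∈ Qset n m l, ∏ i : Fin (n - 1), ((q i : ℝ) + 1)⁻¹ := by
  classical
  obtain ⟨N, rfl⟩ : ∃ N, n = N + 1 := ⟨n - 1, by omega⟩
  have hI : Finset.Icc 1 (N + 1) = (Finset.range (N + 1)).image (· + 1) := by
    ext x
    simp only [Finset.mem_Icc, Finset.mem_image, Finset.mem_range]
    exact ⟨fun h => ⟨x - 1, by omega, by omega⟩, by rintro ⟨a, h, rfl⟩; omega⟩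
  rw [hI, Finset.sum_image (fun a _ b _ h => by simpa using h)]
  have hQ : ∀ k, ∑ q ∈ Qset (N + 1) m (k + 1), ∏ i : Fin (N + 1 - 1), ((q i : ℝ) + 1)⁻¹ =
      ∑ q ∈ Fintype.piFinset (fun _ : Fin N => Finset.range m),
        (if QA N m k q then 1 else 0) * ∏ i : Fin N, ((q i : ℝ) + 1)⁻¹ := by
    intro k
    unfold Qset
    rw [Finset.sum_filter]
    refine Finset.sum_congr rfl fun q _ => ?_
    rw [ite_mul, one_mul, zero_mul]
    exact if_congr Iff.rfl rfl rfl
  simp only [hQ, Nat.add_sub_cancel, Finset.mul_sum]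
  rw [Finset.sum_comm]
  have hin : ∀ q ∈ Fintype.piFinset (fun _ : Fin N => Finset.range m),
      ∑ k ∈ Finset.range (N + 1), (-1 : ℝ) ^ k *
        ((if QA N m k q then 1 else 0) * ∏ i : Fin N, ((q i : ℝ) + 1)⁻¹) =
      if q = (fun _ => m - 1) then ∏ i : Fin N, ((q i : ℝ) + 1)⁻¹ else 0 := by
    intro q hq
    have hq' : ∀ i, q i < m := by simpa [Fintype.mem_piFinset] using hq
    have hv : ¬ QV N m N q := fun h => lt_irrefl _ h.1
    have := QA_alt N m hm q hq' N le_rfl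
    rw [if_neg hv, mul_zero, add_zero] at this
    simp only [← mul_assoc]
    rw [← Finset.sum_mul, this, ite_mul, one_mul, zero_mul]
  rw [Finset.sum_congr rfl hin, Finset.sum_ite_eq', if_pos]
  · simp [Nat.cast_sub hm]
  · simp only [Fintype.mem_piFinset, Finset.mem_range]
    intro i; omega
end

section
/- Let n ≥ 1 be an integer, let m be a positive integer, let 1 ≤ l ≤ n, and let p₁,…,p_{n−1} be positive integers with p₁+⋯+p_{l−1} < m. Then Σ_{σ∈Sh(l,r)} 1/(p_{σ⁻¹(1)}(p_{σ⁻¹(1)}+p_{σ⁻¹(2)})⋯(p_{σ⁻¹(1)}+⋯+p_{σ⁻¹(r−1)})) = [1/(p₁(p₁+p₂)⋯(p₁+⋯+p_{l−1}))] · [1/(p_l(p_l+p_{l+1})⋯(p_l+⋯+p_{r−1}))] for every r with l ≤ r ≤ n. -/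
open Finset
open scoped Classical

namespace ShufAux

/-- insert the last value at index `k` -/
noncomputable def ins {N : ℕ} (k : Fin (N + 1)) (s : Equiv.Perm (Fin N)) :
    Equiv.Perm (Fin (N + 1)) :=
  ((finSuccEquiv' k).trans (Equiv.optionCongr s)).trans (finSuccEquiv' (Fin.last N)).symm

lemma ins_self {N : ℕ} (k : Fin (N + 1)) (s : Equiv.Perm (Fin N)) :
    ins k s k = Fin.last N := by
  simp [ins]

lemma ins_succAbove {N : ℕ} (k : Fin (N + 1)) (s : Equiv.Perm (Fin N)) (i : Fin N) :
    ins k s (k.succAbove i) = (s i).castSucc := by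
  simp [ins]

lemma ins_symm_last {N : ℕ} (k : Fin (N + 1)) (s : Equiv.Perm (Fin N)) :
    (ins k s).symm (Fin.last N) = k := by
  rw [Equiv.symm_apply_eq, ins_self]

lemma ins_symm_castSucc {N : ℕ} (k : Fin (N + 1)) (s : Equiv.Perm (Fin N)) (i : Fin N) :
    (ins k s).symm i.castSucc = k.succAbove (s.symm i) := by
  rw [Equiv.symm_apply_eq, ins_succAbove, Equiv.apply_symm_apply]

lemma ins_bij (N : ℕ) : Function.Bijective
    (fun x : Fin (N + 1) × Equiv.Perm (Fin N) => ins x.1 x.2) := by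
  rw [Fintype.bijective_iff_injective_and_card]
  constructor
  · rintro ⟨k, s⟩ ⟨k', s'⟩ h
    simp only at h
    have hk : k = k' := by
      rw [← ins_symm_last k s, h, ins_symm_last]
    subst hk
    congr 1
    ext i
    have := ins_succAbove k s i
    rw [h, ins_succAbove] at this
    rw [Fin.castSucc_injective _ this]
  · simp [Fintype.card_perm, Nat.factorial_succ]

lemma sum_ins (N : ℕ) (F : Equiv.Perm (Fin (N + 1)) → ℝ) :
    ∑ s, F s = ∑ k : Fin (N + 1), ∑ s : Equiv.Perm (Fin N), F (ins k s) := by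
  rw [← Fintype.sum_prod_type', ← (ins_bij N).sum_comp]

def Sh (N a : ℕ) (s : Equiv.Perm (Fin N)) : Prop :=
  (∀ i j : Fin N, i < j → (j : ℕ) < a → s i < s j) ∧
  (∀ i j : Fin N, i < j → a ≤ (i : ℕ) → s i < s j)

noncomputable def P {N : ℕ} (v : Fin N → ℝ) (s : Equiv.Perm (Fin N)) : ℝ :=
  ∏ j : Fin N, (∑ i ∈ Finset.Iic j, v (s.symm i))⁻¹

lemma sum_Iic {N : ℕ} (j : Fin N) (u : Fin N → ℝ) :
    ∑ i ∈ Finset.Iic j, u i = ∑ i, if i ≤ j then u i else 0 := by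
  rw [← Finset.sum_filter]
  congr 1
  ext i; simp

lemma P_ins {N : ℕ} (v : Fin (N + 1) → ℝ) (k : Fin (N + 1)) (s : Equiv.Perm (Fin N)) :
    P v (ins k s) = (∑ i, v i)⁻¹ * P (fun i => v (k.succAbove i)) s := by
  unfold P
  rw [Fin.prod_univ_castSucc, mul_comm]
  congr 1
  · rw [sum_Iic]
    simp only [Fin.le_last, if_true]
    rw [Equiv.sum_comp (ins k s).symm v]
  · refine Finset.prod_congr rfl fun j _ => ?_
    rw [sum_Iic, sum_Iic, Fin.sum_univ_castSucc]
    have hj : ¬ (Fin.last N ≤ j.castSucc) := not_le.mpr (Fin.castSucc_lt_last j)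
    rw [if_neg hj, add_zero]
    simp only [ins_symm_castSucc, Fin.castSucc_le_castSucc_iff]

lemma succAbove_val {N : ℕ} (k : Fin (N + 1)) (i : Fin N) :
    ((k.succAbove i : Fin (N + 1)) : ℕ) = if (i : ℕ) < k then (i : ℕ) else i + 1 := by
  unfold Fin.succAbove
  simp only [Fin.lt_def, Fin.val_castSucc]
  split_ifs <;> simp

lemma Sh_ins {N a a' : ℕ} (k : Fin (N + 1)) (s : Equiv.Perm (Fin N))
    (h : ((k : ℕ) + 1 = a ∧ a' = k) ∨ ((k : ℕ) = N ∧ a ≤ N ∧ a' = a)) :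
    Sh (N + 1) a (ins k s) ↔ Sh N a' s := by
  constructor
  · rintro ⟨h1, h2⟩
    refine ⟨fun i j hij hj => ?_, fun i j hij hi => ?_⟩
    · have := h1 (k.succAbove i) (k.succAbove j) (by simpa using hij)
        (by rw [succAbove_val]; split_ifs <;> omega)
      simpa [ins_succAbove] using this
    · have := h2 (k.succAbove i) (k.succAbove j) (by simpa using hij)
        (by rw [succAbove_val]; have := i.2; split_ifs <;> omega)
      simpa [ins_succAbove] using this
  · rintro ⟨h1, h2⟩
    refine ⟨fun i j hij hj => ?_, fun i j hij hi => ?_⟩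
    all_goals
      have hij' : (i : ℕ) < j := hij
      have hj2 := j.2
      obtain rfl | ⟨i, rfl⟩ := Fin.eq_self_or_eq_succAbove k i
      · exfalso; omega
      obtain rfl | ⟨j, rfl⟩ := Fin.eq_self_or_eq_succAbove k j
      · rw [ins_self, ins_succAbove]; exact Fin.castSucc_lt_last _
      rw [ins_succAbove, ins_succAbove, Fin.castSucc_lt_castSucc_iff]
      have hl : i < j := by simpa using hij
      have e1 := succAbove_val k i
      have e2 := succAbove_val k j
    · refine h1 i j hl ?_
      split_ifs at e1 e2 <;> omega
    · refine h2 i j hl ?_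
      split_ifs at e1 e2 <;> omega

lemma not_Sh_ins {N a : ℕ} (k : Fin (N + 1)) (s : Equiv.Perm (Fin N))
    (h1 : (k : ℕ) + 1 ≠ a) (h2 : (k : ℕ) ≠ N) : ¬ Sh (N + 1) a (ins k s) := by
  rintro ⟨ha, hb⟩
  have hk := k.2
  have key : ¬ ins k s k < ins k s ⟨k + 1, by omega⟩ := by
    rw [ins_self]; exact not_lt.mpr (Fin.le_last _)
  rcases lt_or_ge ((k : ℕ) + 1) a with h | h
  · exact key (ha _ _ (by simp [Fin.lt_def]) h)
  · exact key (hb _ _ (by simp [Fin.lt_def]) (by omega))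

noncomputable def w (f g : ℕ → ℝ) (a i : ℕ) : ℝ := if i < a then f i else g (i - a)

noncomputable def A (f : ℕ → ℝ) (a : ℕ) : ℝ :=
  ∏ j ∈ Finset.range a, (∑ i ∈ Finset.range (j + 1), f i)⁻¹

noncomputable def G (f g : ℕ → ℝ) (N a : ℕ) : ℝ :=
  ∑ s : Equiv.Perm (Fin N), if Sh N a s then P (fun i => w f g a i) s else 0

lemma sum_w (f g : ℕ → ℝ) (a b : ℕ) : ∑ i : Fin (a + b), w f g a i =
    ∑ i ∈ Finset.range a, f i + ∑ i ∈ Finset.range b, g i := by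
  rw [Fin.sum_univ_eq_sum_range (w f g a), Finset.sum_range_add]
  congr 1
  · refine Finset.sum_congr rfl fun i hi => ?_
    simp [w, Finset.mem_range.mp hi]
  · refine Finset.sum_congr rfl fun i hi => ?_
    simp [w]

lemma inner_eq (f g : ℕ → ℝ) {N a a' : ℕ} (k : Fin (N + 1))
    (h : ((k : ℕ) + 1 = a ∧ a' = k) ∨ ((k : ℕ) = N ∧ a ≤ N ∧ a' = a)) :
    (∑ s : Equiv.Perm (Fin N), if Sh (N + 1) a (ins k s) then
      P (fun i => w f g a i) (ins k s) else 0) =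
    (∑ i : Fin (N + 1), w f g a i)⁻¹ * G f g N a' := by
  unfold G
  rw [Finset.mul_sum]
  refine Finset.sum_congr rfl fun s _ => ?_
  simp only [Sh_ins k s h, mul_ite, mul_zero, P_ins]
  have : (fun i : Fin N => w f g a (k.succAbove i : Fin (N+1))) = fun i : Fin N => w f g a' i := by
    ext i
    have hi := i.2
    rw [succAbove_val]
    unfold w
    split_ifs <;> first | rfl | (exfalso; omega) | (congr 1; omega)
  rw [this]

lemma inner_zero (f g : ℕ → ℝ) {N a : ℕ} (k : Fin (N + 1))
    (h1 : (k : ℕ) + 1 ≠ a) (h2 : (k : ℕ) ≠ N) :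
    (∑ s : Equiv.Perm (Fin N), if Sh (N + 1) a (ins k s) then
      P (fun i => w f g a i) (ins k s) else 0) = 0 := by
  refine Finset.sum_eq_zero fun s _ => ?_
  rw [if_neg (not_Sh_ins k s h1 h2)]

lemma A_succ (f : ℕ → ℝ) (a : ℕ) :
    A f (a + 1) = A f a * (∑ i ∈ Finset.range (a + 1), f i)⁻¹ := by
  unfold A; rw [Finset.prod_range_succ]

lemma main (f g : ℕ → ℝ) (hf : ∀ i, 0 < f i) (hg : ∀ i, 0 < g i) :
    ∀ N a b, a + b = N → G f g N a = A f a * A g b := by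
  have pos : ∀ u : ℕ → ℝ, (∀ i, 0 < u i) → ∀ n, 0 < ∑ i ∈ Finset.range (n + 1), u i :=
    fun u hu n => Finset.sum_pos (fun i _ => hu i) (by simp)
  intro N
  induction N with
  | zero =>
    intro a b h
    obtain ⟨rfl, rfl⟩ : a = 0 ∧ b = 0 := by omega
    have : ∀ s : Equiv.Perm (Fin 0), Sh 0 0 s := fun s => ⟨fun i => i.elim0, fun i => i.elim0⟩
    simp [G, A, P, this]
  | succ N ih =>
    intro a b h
    have hG : G f g (N + 1) a = ∑ k : Fin (N + 1), ∑ s : Equiv.Perm (Fin N),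
      if Sh (N + 1) a (ins k s) then P (fun i => w f g a i) (ins k s) else 0 := by
      unfold G; rw [sum_ins]
    have hS := sum_w f g a b
    rw [h] at hS
    rw [hG]
    rcases a with _ | a
    · obtain rfl : b = N + 1 := by omega
      rw [Finset.sum_eq_single (Fin.last N), inner_eq f g (a' := 0) _ (by simp), hS,
        ih 0 N (by omega), A_succ]
      · simp; ring
      · intro k _ hk
        exact inner_zero f g k (by omega) (fun h => hk (Fin.ext h))
      · simp
    rcases b with _ | b
    · obtain rfl : a = N := by omega
      rw [Finset.sum_eq_single (Fin.last a), inner_eq f g (a' := a) _ (by simp), hS,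
        ih a 0 (by omega), A_succ]
      · simp; ring
      · intro k _ hk
        have : (k : ℕ) ≠ a := fun h => hk (Fin.ext h)
        exact inner_zero f g k (by omega) this
      · simp
    · have hne : (⟨a, by omega⟩ : Fin (N + 1)) ≠ Fin.last N := by
        simp [Fin.ext_iff]; omega
      rw [Fintype.sum_eq_add (⟨a, by omega⟩ : Fin (N + 1)) (Fin.last N) hne,
        inner_eq f g (a' := a) _ (by simp),
        inner_eq f g (a' := a + 1) _ (by right; simp; omega), hS,
        ih a (b + 1) (by omega), ih (a + 1) b (by omega), A_succ, A_succ]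
      · have := pos f hf a
        have := pos g hg b
        field_simp
      · rintro k ⟨hk1, hk2⟩
        exact inner_zero f g k (fun h => hk1 (Fin.ext (by simp; omega))) (fun h => hk2 (Fin.ext h))

lemma prod_filter_range (M : ℕ) (q : ℕ → Prop) (u : ℕ → ℝ) :
    ∏ j ∈ Finset.univ.filter (fun j : Fin M => q j), u j =
      ∏ j ∈ (Finset.range M).filter q, u j := by
  rw [Finset.prod_filter, Finset.prod_filter, Fin.prod_univ_eq_prod_range (fun j => if q j then u j else 1)]

lemma sum_filter_range (M : ℕ) (q : ℕ → Prop) (u : ℕ → ℝ) :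
    ∑ j ∈ Finset.univ.filter (fun j : Fin M => q j), u j =
      ∑ j ∈ (Finset.range M).filter q, u j := by
  rw [Finset.sum_filter, Finset.sum_filter, Fin.sum_univ_eq_sum_range (fun j => if q j then u j else 0)]

end ShufAux

/-- The shuffle identity used in the proof of Proposition 2.1: for every
`r` with `l ≤ r ≤ n`,
`∑_{σ∈Sh(l,r)} 1/(p_{σ⁻¹(1)}(p_{σ⁻¹(1)}+p_{σ⁻¹(2)})⋯(p_{σ⁻¹(1)}+⋯+p_{σ⁻¹(r-1)}))
  = [1/(p₁(p₁+p₂)⋯(p₁+⋯+p_{l-1}))]·[1/(p_l(p_l+p_{l+1})⋯(p_l+⋯+p_{r-1}))]`.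
Here the positive integers `(p₁,…,p_{n-1})` are encoded by `p : Fin (n-1) → ℕ`
with `p_j = p (j-1) + 1`, `{1,…,r-1}` is encoded as `Fin (r-1)`, and `Sh(l,r)` is
the set of permutations of `Fin (r-1)` monotone increasing on the (0-indexed)
subsets `{i | i < l-1}` and `{i | l-1 ≤ i}`. -/
theorem shuffle_identity_p (n m l : ℕ) (hn : 1 ≤ n) (hm : 1 ≤ m) (hl : 1 ≤ l) (hln : l ≤ n)
    (p : Fin (n - 1) → ℕ)
    (hp : (∑ i ∈ Finset.univ.filter (fun i : Fin (n - 1) => (i : ℕ) < l - 1), (p i + 1)) < m) :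
    ∀ r, ∀ _hlr : l ≤ r, ∀ _hrn : r ≤ n,
      ∑ σ ∈ Finset.univ.filter (fun σ : Equiv.Perm (Fin (r - 1)) =>
          (∀ i j : Fin (r - 1), i < j → (j : ℕ) < l - 1 → σ i < σ j) ∧
          (∀ i j : Fin (r - 1), i < j → l - 1 ≤ (i : ℕ) → σ i < σ j)),
        ∏ j : Fin (r - 1),
          (∑ i ∈ Finset.Iic j,
            ((p (Fin.castLE (by omega : r - 1 ≤ n - 1) (σ.symm i)) : ℝ) + 1))⁻¹
      = (∏ j ∈ Finset.univ.filter (fun j : Fin (n - 1) => (j : ℕ) < l - 1),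
          (∑ i ∈ Finset.univ.filter (fun i : Fin (n - 1) => i ≤ j), ((p i : ℝ) + 1))⁻¹) *
        (∏ j ∈ Finset.univ.filter (fun j : Fin (n - 1) => l - 1 ≤ (j : ℕ) ∧ (j : ℕ) < r - 1),
          (∑ i ∈ Finset.univ.filter (fun i : Fin (n - 1) => l - 1 ≤ (i : ℕ) ∧ i ≤ j),
            ((p i : ℝ) + 1))⁻¹) := by
  intro r hlr hrn
  set f : ℕ → ℝ := fun i => if h : i < n - 1 then (p ⟨i, h⟩ : ℝ) + 1 else 1 with hf
  have hfp : ∀ i, 0 < f i := by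
    intro i; simp only [hf]; split_ifs <;> positivity
  have hfv : ∀ i : Fin (n - 1), (p i : ℝ) + 1 = f i := by
    intro i; simp [hf]
  obtain ⟨b, hb⟩ : ∃ b, (l - 1) + b = r - 1 := ⟨r - l, by omega⟩
  have key := ShufAux.main f (fun i => f (l - 1 + i)) hfp (fun i => hfp _) (r - 1) (l - 1) b hb
  have hw : ∀ i, ShufAux.w f (fun i => f (l - 1 + i)) (l - 1) i = f i := by
    intro i; unfold ShufAux.w
    split_ifs with h
    · rfl
    · simp only; congr 1; omega
  simp only [hfv]
  convert key using 1
  · rw [ShufAux.G, Finset.sum_filter]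
    refine Finset.sum_congr rfl fun s _ => ?_
    simp only [ShufAux.Sh, ShufAux.P, hw, Fin.val_castLE]
  · congr 1
    · rw [ShufAux.A]
      have h1 : ∀ j : Fin (n - 1), ∑ i ∈ Finset.univ.filter (fun i : Fin (n - 1) => i ≤ j), f i
          = ∑ i ∈ Finset.range (j + 1), f i := by
        intro j
        have := ShufAux.sum_filter_range (n - 1) (fun i => i ≤ (j : ℕ)) f
        simp only [Fin.le_def]
        refine (Eq.trans (by congr!) this).trans ?_
        congr 1
        ext i
        have := j.2
        simp only [Finset.mem_filter, Finset.mem_range]; omega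
      simp only [h1]
      have h3 := ShufAux.prod_filter_range (n - 1) (fun j => j < l - 1)
        (fun j => (∑ i ∈ Finset.range (j + 1), f i)⁻¹)
      refine (Eq.trans (by congr!) h3).trans ?_
      congr 1
      ext i
      simp only [Finset.mem_filter, Finset.mem_range]; omega
    · rw [ShufAux.A]
      have h1 : ∀ j : Fin (n - 1), ∑ i ∈ Finset.univ.filter
          (fun i : Fin (n - 1) => l - 1 ≤ (i : ℕ) ∧ i ≤ j), f i
          = ∑ i ∈ Finset.Ico (l - 1) (j + 1), f i := by
        intro j
        have := ShufAux.sum_filter_range (n - 1) (fun i => l - 1 ≤ i ∧ i ≤ (j : ℕ)) f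
        simp only [Fin.le_def]
        refine (Eq.trans (by congr!) this).trans ?_
        congr 1
        ext i
        have := j.2
        simp only [Finset.mem_filter, Finset.mem_range, Finset.mem_Ico]; omega
      simp only [h1]
      have h3 := ShufAux.prod_filter_range (n - 1) (fun j => l - 1 ≤ j ∧ j < r - 1)
        (fun j => (∑ i ∈ Finset.Ico (l - 1) (j + 1), f i)⁻¹)
      refine (Eq.trans (by congr!) h3).trans ?_
      have h2 : (Finset.range (n - 1)).filter (fun j => l - 1 ≤ j ∧ j < r - 1)
          = Finset.Ico (l - 1) (r - 1) := by
        ext i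
        simp only [Finset.mem_filter, Finset.mem_range, Finset.mem_Ico]; omega
      refine (Finset.prod_congr (Eq.trans (by congr!) h2) fun _ _ => rfl).trans ?_
      rw [Finset.prod_Ico_eq_prod_range, ← hb, Nat.add_sub_cancel_left]
      refine Finset.prod_congr rfl fun j _ => ?_
      rw [Finset.sum_Ico_eq_sum_range]
      congr 2
      congr 1
      omega
end

section
/- Let n be a positive integer and ε > 0. Then the series Σ_{m₁,…,mₙ=1}^∞ 1/(m₁(m₁+m₂)⋯(m₁+⋯+m_{n−1})·(m₁+⋯+mₙ)^{1+ε}) converges. -/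
open Finset

theorem summable_pi_prod (f : ℕ → ℝ) (hf : Summable f) (h0 : ∀ m, 0 ≤ f m) (n : ℕ) :
    Summable fun mv : Fin n → ℕ => ∏ i, f (mv i) := by
  refine summable_of_sum_le (c := (∑' m, f m) ^ n)
    (fun mv => Finset.prod_nonneg fun i _ => h0 _) ?_
  intro u
  have hsub : u ⊆ Fintype.piFinset (fun i : Fin n => u.image (fun mv => mv i)) := by
    intro mv hmv
    rw [Fintype.mem_piFinset]
    intro i
    exact Finset.mem_image_of_mem _ hmv
  refine (Finset.sum_le_sum_of_subset_of_nonneg hsub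
    (fun mv _ _ => Finset.prod_nonneg fun i _ => h0 _)).trans ?_
  rw [← Finset.prod_univ_sum (fun i : Fin n => u.image (fun mv => mv i)) (fun _ m => f m)]
  refine (Finset.prod_le_prod (fun i _ => Finset.sum_nonneg fun m _ => h0 m)
    (fun i _ => hf.sum_le_tsum _ (fun m _ => h0 m))).trans ?_
  simp

theorem le_PS {N : ℕ} (p : Fin N → ℕ) (i : Fin N) (j : ℕ) (h : (i : ℕ) < j) :
    p i + 1 ≤ PS p j := by
  unfold PS
  exact Finset.single_le_sum (f := fun i => p i + 1) (fun _ _ => Nat.zero_le _)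
    (by simp [h])

/-- The series `∑_{m₁,…,mₙ≥1} 1/(m₁(m₁+m₂)⋯(m₁+⋯+m_{n-1})(m₁+⋯+mₙ)^{1+ε})`
converges. -/
theorem harmonic_tail_summable (n : ℕ) (hn : 1 ≤ n) (ε : ℝ) (hε : 0 < ε) :
    Summable fun mv : Fin n → ℕ =>
      ((∏ j ∈ Finset.Icc 1 (n - 1), ((PS mv j : ℕ) : ℝ)) *
        ((PS mv n : ℕ) : ℝ) ^ ((1 : ℝ) + ε))⁻¹ := by
  obtain ⟨k, rfl⟩ : ∃ k, n = k + 1 := ⟨n - 1, by omega⟩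
  set δ : ℝ := ε / ((k + 1 : ℕ) : ℝ) with hδ
  have hδ0 : 0 < δ := by positivity
  have hf : Summable fun m : ℕ => (((m + 1 : ℕ) : ℝ) ^ (1 + δ))⁻¹ :=
    (summable_nat_add_iff (f := fun m : ℕ => ((m : ℝ) ^ (1 + δ))⁻¹) 1).2
      (Real.summable_nat_rpow_inv.2 (by linarith))
  refine Summable.of_nonneg_of_le (fun mv => by positivity) (fun mv => ?_)
    (summable_pi_prod _ hf (fun m => by positivity) (k + 1))
  rw [Finset.prod_inv_distrib]
  refine inv_anti₀ (Finset.prod_pos fun i _ => by positivity) ?_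
  have hpos : (0 : ℝ) < (PS mv (k + 1) : ℕ) := by
    have := le_PS mv 0 (k + 1) (by simp)
    exact_mod_cast (by omega : 0 < PS mv (k + 1))
  have key : ((∏ j ∈ Finset.Icc 1 (k + 1 - 1), ((PS mv j : ℕ) : ℝ)) *
        ((PS mv (k + 1) : ℕ) : ℝ) ^ ((1 : ℝ) + ε)) =
      ∏ i : Fin (k + 1), (((PS mv (i + 1) : ℕ) : ℝ) * ((PS mv (k + 1) : ℕ) : ℝ) ^ δ) := by
    rw [Finset.prod_mul_distrib, Fin.prod_univ_eq_prod_range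
      (fun i => ((PS mv (i + 1) : ℕ) : ℝ)) (k + 1), Finset.prod_range_succ,
      Finset.prod_const, Finset.card_univ, Fintype.card_fin, ← Real.rpow_mul_natCast hpos.le,
      Real.rpow_add hpos, Real.rpow_one, hδ, div_mul_cancel₀ _ (by positivity), mul_assoc]
    congr 1
    rw [Nat.add_sub_cancel, Finset.range_eq_Ico,
      Finset.prod_Ico_add' (fun j => ((PS mv j : ℕ) : ℝ)) 0 k 1]
    rfl
  rw [key]
  refine Finset.prod_le_prod (fun i _ => by positivity) (fun i _ => ?_)
  have h1 : ((mv i + 1 : ℕ) : ℝ) ≤ (PS mv (i + 1) : ℕ) := by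
    exact_mod_cast le_PS mv i (i + 1) (by omega)
  have h2 : ((mv i + 1 : ℕ) : ℝ) ≤ (PS mv (k + 1) : ℕ) := by
    exact_mod_cast le_PS mv i (k + 1) i.2
  rw [Real.rpow_add (by positivity), Real.rpow_one]
  exact mul_le_mul h1 (Real.rpow_le_rpow (by positivity) h2 hδ0.le) (by positivity) (by positivity)
end
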